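/- Assume hypotheses (C) and (E). Let A_1, …, A_K ∈ 𝐍 and B_1, …, B_L ∈ 𝐍 with ‖A_k Ω‖ = ‖B_l Ω‖ = 1 for all k, l, and let c_1, …, c_K, d_1, …, d_L ∈ ℂ. If ∑_{k=1}^K c_k ω_{A_k}(C) = 0 for every C ∈ 𝐍, then for every C ∈ 𝐍: ∑_{k=1}^K ∑_{l=1}^L c_k d_l ⟨A_k Ω, B_l Ω⟩ ⟨B_l Ω, C A_k Ω⟩ = 0. (This is the well-definedness of the bilinear product (ω_A × ω_B)(C) = ⟨A Ω, B Ω⟩⟨B Ω, C A Ω⟩ on the linear span of the states, turning that span into an algebra.) -/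

import Mathlib

open scoped ComplexInnerProductSpace

/-!
Testing `∑ c_k ω_{A_k} = 0` on operators `Z* X Z'`, with `Z`, `Z'` commuting with every `A_k`,
amounts to testing the operator `∑ c_k A_k* X A_k` between the vectors `Z Ω` and `Z' Ω`. By (C)
these vectors are total, so that operator vanishes for every `X`. Now take `X = B E B* C` and
compress by `E`: (E) turns `E A_k* B E B* C A_k E` into `⟨A_k Ω, B Ω⟩ ⟨B Ω, C A_k Ω⟩ E`.
-/

theorem mul_mul_mul_mul_eq_mul_smul {R A : Type*} [CommSemiring R] [Semiring A] [Algebra R A]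
    {e a b : A} {r s : R} (ha : e * a * e = r • e) (hb : e * b * e = s • e) :
    e * (a * e * b) * e = (r * s) • e :=
  calc
    e * (a * e * b) * e = e * a * e * (b * e) := by simp only [mul_assoc]
    _ = r • (e * b * e) := by rw [ha, smul_mul_assoc, mul_assoc]
    _ = (r * s) • e := by rw [hb, smul_smul]

theorem exists_superset_of_finite_of_directed {α ι : Type*} [Nonempty ι] {f : ι → Set α}
    (hf : Directed (· ⊆ ·) f) {s : Set α} (hs : s.Finite) (hsf : s ⊆ ⋃ i, f i) :
    ∃ i, s ⊆ f i := by
  lift s to Finset α using hs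
  exact hf.exists_mem_subset_of_finset_subset_biUnion hsf

section CyclicVector

open scoped InnerProductSpace

variable {𝕜 H : Type*} [RCLike 𝕜] [NormedAddCommGroup H] [InnerProductSpace 𝕜 H]

/-- `Ω` is a cyclic vector for the set `D` of operators: the vectors `X Ω` with `X ∈ D` span a
dense subspace. Hypothesis (C) says this for the relative commutants `D = N (n + 1) ∩ (N n)'`. -/
def IsCyclicVector (D : Set (H →L[𝕜] H)) (Ω : H) : Prop :=
  Dense (Submodule.span 𝕜 ((fun X : H →L[𝕜] H ↦ X Ω) '' D) : Set H)

theorem IsCyclicVector.mono {D D' : Set (H →L[𝕜] H)} {Ω : H} (hD : IsCyclicVector D Ω)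
    (h : D ⊆ D') : IsCyclicVector D' Ω :=
  Dense.mono (Submodule.span_mono (Set.image_mono h)) hD

theorem IsCyclicVector.eq_zero_of_forall_inner_eq_zero {D : Set (H →L[𝕜] H)} {Ω : H}
    (hD : IsCyclicVector D Ω) {T : H →L[𝕜] H}
    (h : ∀ Z ∈ D, ∀ Z' ∈ D, ⟪Z Ω, T (Z' Ω)⟫_𝕜 = 0) : T = 0 := by
  refine ContinuousLinearMap.ext_on hD (Set.forall_mem_image.2 fun Z' hZ' ↦ ?_)
  have hspan : Submodule.span 𝕜 ((fun X : H →L[𝕜] H ↦ X Ω) '' D) ≤ (𝕜 ∙ T (Z' Ω))ᗮ :=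
    Submodule.span_le.2 <| Set.forall_mem_image.2 fun Z hZ ↦
      Submodule.mem_orthogonal_singleton_iff_inner_left.2 (h Z hZ Z' hZ')
  exact hD.eq_zero_of_inner_right 𝕜 fun v hv ↦
    Submodule.mem_orthogonal_singleton_iff_inner_left.1 (hspan hv)

end CyclicVector

section OperatorAlgebra

open scoped InnerProductSpace

variable {𝕜 H : Type*} [RCLike 𝕜] [NormedAddCommGroup H] [InnerProductSpace 𝕜 H]
  [CompleteSpace H]

/-- `E` compresses every operator in `S` to a multiple of `E`, the factor being the value of the
vector functional `⟪Ω, · Ω⟫`. Hypothesis (E) provides such an `E` for each `S = N n`. -/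
def CompressesToVectorFunctional (E : H →L[𝕜] H) (S : Set (H →L[𝕜] H)) (Ω : H) : Prop :=
  ∀ C ∈ S, E * C * E = ⟪Ω, C Ω⟫_𝕜 • E

theorem CompressesToVectorFunctional.mul_star_mul_mul {M : StarSubalgebra 𝕜 (H →L[𝕜] H)}
    {E A B C : H →L[𝕜] H} {Ω : H} (hE : CompressesToVectorFunctional E M Ω)
    (hA : A ∈ M) (hB : B ∈ M) (hC : C ∈ M) :
    E * (star A * (B * E * star B * C) * A) * E =
      (⟪A Ω, B Ω⟫_𝕜 * ⟪B Ω, C (A Ω)⟫_𝕜) • E := by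
  have hAB : E * (star A * B) * E = ⟪A Ω, B Ω⟫_𝕜 • E := by
    rw [hE _ (mul_mem (star_mem hA) hB), mul_apply_eq_comp,
      ContinuousLinearMap.star_eq_adjoint, ContinuousLinearMap.adjoint_inner_right]
  have hBCA : E * (star B * C * A) * E = ⟪B Ω, C (A Ω)⟫_𝕜 • E := by
    rw [hE _ (mul_mem (mul_mem (star_mem hB) hC) hA), mul_assoc, mul_apply_eq_comp,
      ContinuousLinearMap.star_eq_adjoint, ContinuousLinearMap.adjoint_inner_right,
      mul_apply_eq_comp]
  simpa only [mul_assoc] using mul_mul_mul_mul_eq_mul_smul hAB hBCA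

theorem inner_star_mul_mul_apply_of_commute {A X Z Z' : H →L[𝕜] H} (Ω : H)
    (hZ : Commute A Z) (hZ' : Commute A Z') :
    ⟪Z Ω, (star A * X * A) (Z' Ω)⟫_𝕜 = ⟪A Ω, (star Z * X * Z') (A Ω)⟫_𝕜 := by
  have hAZ : A (Z Ω) = Z (A Ω) := DFunLike.congr_fun hZ Ω
  have hAZ' : A (Z' Ω) = Z' (A Ω) := DFunLike.congr_fun hZ' Ω
  simp only [mul_apply_eq_comp, ContinuousLinearMap.star_eq_adjoint,
    ContinuousLinearMap.adjoint_inner_right, hAZ, hAZ']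

variable {κ : Type*} [Fintype κ]

theorem IsCyclicVector.sum_smul_star_mul_mul_eq_zero {D : Set (H →L[𝕜] H)} {Ω : H}
    (hD : IsCyclicVector D Ω) {A : κ → H →L[𝕜] H} (hDA : ∀ Z ∈ D, ∀ k, Commute (A k) Z)
    {c : κ → 𝕜} {X : H →L[𝕜] H}
    (h : ∀ Z ∈ D, ∀ Z' ∈ D, ∑ k, c k * ⟪A k Ω, (star Z * X * Z') (A k Ω)⟫_𝕜 = 0) :
    ∑ k, c k • (star (A k) * X * A k) = 0 := by
  refine hD.eq_zero_of_forall_inner_eq_zero fun Z hZ Z' hZ' ↦ ?_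
  calc
    ⟪Z Ω, (∑ k, c k • (star (A k) * X * A k)) (Z' Ω)⟫_𝕜 =
        ∑ k, c k * ⟪Z Ω, (star (A k) * X * A k) (Z' Ω)⟫_𝕜 := by
      simp only [sum_apply, smul_apply, inner_sum,
        inner_smul_right]
    _ = ∑ k, c k * ⟪A k Ω, (star Z * X * Z') (A k Ω)⟫_𝕜 := by
      simp only [inner_star_mul_mul_apply_of_commute Ω (hDA Z hZ _) (hDA Z' hZ' _)]
    _ = 0 := h Z hZ Z' hZ'

theorem sum_mul_inner_mul_inner_eq_zero {M₀ M : StarSubalgebra 𝕜 (H →L[𝕜] H)} (hM : M₀ ≤ M)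
    {Ω : H} (hcyc : IsCyclicVector ((M : Set (H →L[𝕜] H)) ∩ Set.centralizer M₀) Ω)
    {E : H →L[𝕜] H} (hEM : E ∈ M) (hE₀ : E ≠ 0) (hE : CompressesToVectorFunctional E M₀ Ω)
    {A : κ → H →L[𝕜] H} {B C : H →L[𝕜] H} (hA : ∀ k, A k ∈ M₀) (hB : B ∈ M₀) (hC : C ∈ M₀)
    {c : κ → 𝕜} (hvanish : ∀ X ∈ M, ∑ k, c k * ⟪A k Ω, X (A k Ω)⟫_𝕜 = 0) :
    ∑ k, c k * (⟪A k Ω, B Ω⟫_𝕜 * ⟪B Ω, C (A k Ω)⟫_𝕜) = 0 := by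
  have hX : B * E * star B * C ∈ M :=
    mul_mem (mul_mem (mul_mem (hM hB) hEM) (star_mem (hM hB))) (hM hC)
  have hsum : ∑ k, c k • (star (A k) * (B * E * star B * C) * A k) = 0 :=
    hcyc.sum_smul_star_mul_mul_eq_zero (fun Z hZ k ↦ hZ.2 _ (hA k)) fun Z hZ Z' hZ' ↦
      hvanish _ (mul_mem (mul_mem (star_mem hZ.1) hX) hZ'.1)
  have hsmul : (∑ k, c k * (⟪A k Ω, B Ω⟫_𝕜 * ⟪B Ω, C (A k Ω)⟫_𝕜)) • E = 0 :=
    calc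
      _ = ∑ k, c k • (E * (star (A k) * (B * E * star B * C) * A k) * E) := by
        simp only [hE.mul_star_mul_mul (hA _) hB hC, Finset.sum_smul, smul_smul]
      _ = E * (∑ k, c k • (star (A k) * (B * E * star B * C) * A k)) * E := by
        simp only [Finset.mul_sum, Finset.sum_mul, mul_smul_comm, smul_mul_assoc]
      _ = 0 := by rw [hsum, mul_zero, zero_mul]
  exact (smul_eq_zero.1 hsmul).resolve_right hE₀

variable {ι κ' : Type*} [Preorder ι] [IsDirectedOrder ι] [Nonempty ι] [Fintype κ']

theorem stmt_10_general {N : ι → StarSubalgebra 𝕜 (H →L[𝕜] H)} (hN : Monotone N) {Ω : H}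
    (hcyc : ∀ i, ∃ j, IsCyclicVector ((N j : Set (H →L[𝕜] H)) ∩ Set.centralizer (N i)) Ω)
    (hcomp : ∀ i, ∃ j, ∃ E ∈ N j, E ≠ 0 ∧ CompressesToVectorFunctional E (N i) Ω)
    {A : κ → H →L[𝕜] H} {B : κ' → H →L[𝕜] H} (hA : ∀ k, A k ∈ ⋃ i, (N i : Set (H →L[𝕜] H)))
    (hB : ∀ l, B l ∈ ⋃ i, (N i : Set (H →L[𝕜] H))) {c : κ → 𝕜} (d : κ' → 𝕜)
    (hvanish : ∀ C ∈ ⋃ i, (N i : Set (H →L[𝕜] H)), ∑ k, c k * ⟪A k Ω, C (A k Ω)⟫_𝕜 = 0) :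
    ∀ C ∈ ⋃ i, (N i : Set (H →L[𝕜] H)),
      ∑ k, ∑ l, c k * d l * ⟪A k Ω, B l Ω⟫_𝕜 * ⟪B l Ω, C (A k Ω)⟫_𝕜 = 0 := by
  intro C hC
  obtain ⟨i, hi⟩ : ∃ i, insert C (Set.range A ∪ Set.range B) ⊆ (N i : Set (H →L[𝕜] H)) :=
    exists_superset_of_finite_of_directed hN.directed_le (Set.toFinite _) <|
      Set.insert_subset hC <|
        Set.union_subset (Set.range_subset_iff.2 hA) (Set.range_subset_iff.2 hB)
  obtain ⟨hCi, hAi, hBi⟩ : C ∈ N i ∧ (∀ k, A k ∈ N i) ∧ ∀ l, B l ∈ N i := by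
    simpa only [Set.insert_subset_iff, Set.union_subset_iff, Set.range_subset_iff,
      SetLike.mem_coe] using hi
  obtain ⟨j₁, hj₁⟩ := hcyc i
  obtain ⟨j₂, E, hEj₂, hE₀, hE⟩ := hcomp i
  obtain ⟨j, hij, hj₁j, hj₂j⟩ : ∃ j, i ≤ j ∧ j₁ ≤ j ∧ j₂ ≤ j :=
    let ⟨j', hi, h₁⟩ := exists_ge_ge i j₁
    let ⟨j, hj', h₂⟩ := exists_ge_ge j' j₂
    ⟨j, hi.trans hj', h₁.trans hj', h₂⟩
  have hcycj := hj₁.mono (Set.inter_subset_inter_left _ (hN hj₁j))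
  have hl (l : κ') : ∑ k, c k * (⟪A k Ω, B l Ω⟫_𝕜 * ⟪B l Ω, C (A k Ω)⟫_𝕜) = 0 :=
    sum_mul_inner_mul_inner_eq_zero (hN hij) hcycj (hN hj₂j hEj₂) hE₀ hE hAi (hBi l) hCi
      fun X hX ↦ hvanish X (Set.mem_iUnion_of_mem j hX)
  calc
    ∑ k, ∑ l, c k * d l * ⟪A k Ω, B l Ω⟫_𝕜 * ⟪B l Ω, C (A k Ω)⟫_𝕜 =
        ∑ l, d l * ∑ k, c k * (⟪A k Ω, B l Ω⟫_𝕜 * ⟪B l Ω, C (A k Ω)⟫_𝕜) := by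
      rw [Finset.sum_comm]
      simp only [Finset.mul_sum, mul_assoc, mul_left_comm]
    _ = 0 := by simp only [hl, mul_zero, Finset.sum_const_zero]

end OperatorAlgebra

/-- from the proof of Proposition 4.1: well-definedness of the product
`(ω_A × ω_B)(C) = ⟨AΩ, BΩ⟩⟨BΩ, C AΩ⟩` on the linear span of the states.  Under
hypotheses (C) and (E): if `∑_k c_k ω_{A_k}` vanishes on `𝐍`, then for every `C ∈ 𝐍`
the double sum `∑_k ∑_l c_k d_l ⟨A_k Ω, B_l Ω⟩⟨B_l Ω, C A_k Ω⟩` vanishes. -/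
theorem stmt_10 {H : Type*} [NormedAddCommGroup H] [InnerProductSpace ℂ H] [CompleteSpace H]
    [TopologicalSpace.SeparableSpace H]
    (N : ℕ → VonNeumannAlgebra H)
    (hmono : ∀ n, (N n : Set (H →L[ℂ] H)) ⊆ (N (n + 1) : Set (H →L[ℂ] H)))
    (Ω : H) (hΩ : ‖Ω‖ = 1)
    -- Hypothesis (C)
    (hC : ∀ n : ℕ, Dense
      (Submodule.span ℂ
        {x : H | ∃ X ∈ N (n + 1), (∀ Y ∈ N n, X * Y = Y * X) ∧ x = X Ω} : Set H))
    -- Hypothesis (E)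
    (hE : ∀ n : ℕ, ∃ E : H →L[ℂ] H, E ∈ N (n + 1) ∧ E ≠ 0 ∧
      IsSelfAdjoint E ∧ IsIdempotentElem E ∧
      ∀ C ∈ N n, E * C * E = ⟪Ω, C Ω⟫ • E)
    (K L : ℕ) (A : Fin K → (H →L[ℂ] H)) (B : Fin L → (H →L[ℂ] H))
    (hA : ∀ k, A k ∈ ⋃ n, (N n : Set (H →L[ℂ] H)))
    (hB : ∀ l, B l ∈ ⋃ n, (N n : Set (H →L[ℂ] H)))
    (hAnorm : ∀ k, ‖A k Ω‖ = 1) (hBnorm : ∀ l, ‖B l Ω‖ = 1)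
    (c : Fin K → ℂ) (d : Fin L → ℂ)
    (hvanish : ∀ C ∈ ⋃ n, (N n : Set (H →L[ℂ] H)),
      ∑ k, c k * ⟪A k Ω, C (A k Ω)⟫ = 0) :
    ∀ C ∈ ⋃ n, (N n : Set (H →L[ℂ] H)),
      ∑ k, ∑ l, c k * d l * ⟪A k Ω, B l Ω⟫ * ⟪B l Ω, C (A k Ω)⟫ = 0 := by
  refine stmt_10_general (N := fun n ↦ (N n).toStarSubalgebra) (monotone_nat_of_le_succ hmono)
    (fun n ↦ ⟨n + 1, ?_⟩)
    (fun n ↦ ⟨n + 1, (hE n).imp fun _ ⟨hEN, hE₀, _, _, hE⟩ ↦ ⟨hEN, hE₀, hE⟩⟩) hA hB d hvanish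
  simpa [IsCyclicVector, Set.image, Set.mem_centralizer_iff, and_assoc, eq_comm] using hC n
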